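/- Let n, t be integers with 1 ≤ t ≤ n−1. Then every complete linear map φ: 𝒢_n → 𝒢_n satisfying, for all G ∈ 𝒢_n, that α(φ(G)) = t if and only if α(G) = t, is a bijection of 𝒢_n. -/

import Mathlib

/-- The independence number of a simple graph: the maximum cardinality of a set
of pairwise nonadjacent vertices. -/
noncomputable def indepNum {V : Type*} (G : SimpleGraph V) : ℕ :=
  sSup {k | ∃ s : Finset V, (∀ a ∈ s, ∀ b ∈ s, a ≠ b → ¬ G.Adj a b) ∧ s.card = k}

/-- `G_{ij}`: the graph whose only edge is `(i, j)`. -/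
def singleEdge {V : Type*} (i j : V) : SimpleGraph V :=
  SimpleGraph.fromEdgeSet {s(i, j)}

/-- A map on graphs is linear if it preserves unions. -/
def IsLinearMap' {V : Type*} (φ : SimpleGraph V → SimpleGraph V) : Prop :=
  ∀ G H : SimpleGraph V, φ (G ⊔ H) = φ G ⊔ φ H

/-- A complete linear map: a linear map sending the complete graph to itself. -/
def IsCompleteLinearMap {V : Type*} (φ : SimpleGraph V → SimpleGraph V) : Prop :=
  IsLinearMap' φ ∧ φ ⊤ = ⊤

/-- A vertex permutation. -/
def IsVertexPermutation {V : Type*} (φ : SimpleGraph V → SimpleGraph V) : Prop :=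
  ∃ σ : Equiv.Perm V, ∀ i j : V, i ≠ j → φ (singleEdge i j) = singleEdge (σ i) (σ j)

/-- An edge permutation. -/
def IsEdgePermutation {V : Type*} (φ : SimpleGraph V → SimpleGraph V) : Prop :=
  φ ⊤ = ⊤ ∧ ∀ i j : V, i ≠ j → ((φ (singleEdge i j)).edgeSet).ncard = 1

/-!
Put `s = max 2 t`. Deleting edges one at a time shows that `φ` preserves, in both directions, the
existence of an independent `s`-set. Applied to the complement of the clique on an `s`-set `S`,
whose only independent `s`-set is `S`, this yields a permutation `p` of the `s`-sets such that
`p S` is independent in `φ G` exactly when `S` is independent in `G`. In particular `G` and `φ G`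
have equally many dependent `s`-sets. If `G` is a single edge, each edge of `φ G` alone already
accounts for that many, so all edges of `φ G` lie in the same `s`-sets, which makes `φ G` a single
edge. Hence `φ` permutes the single edges, and these generate all graphs under union.
-/

theorem exists_superset_card_eq_notMem {V : Type*} [Finite V] {A : Finset V} {x : V} {s : ℕ}
    (hx : x ∉ A) (hA : A.card ≤ s) (hs : s < Nat.card V) : ∃ S, A ⊆ S ∧ x ∉ S ∧ S.card = s := by
  classical
  have := Fintype.ofFinite V
  rw [Nat.card_eq_fintype_card] at hs
  have hcard : s ≤ (Finset.univ.erase x).card := by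
    rw [Finset.card_erase_of_mem (Finset.mem_univ x), Finset.card_univ]
    omega
  obtain ⟨S, hAS, hSx, hS⟩ := Finset.exists_subsuperset_card_eq
    (Finset.subset_erase.2 ⟨A.subset_univ, hx⟩) hA hcard
  exact ⟨S, hAS, (Finset.subset_erase.1 hSx).2, hS⟩

theorem bijective_of_injOn_isAtom {α : Type*} [CompleteLattice α] [IsAtomistic α] [Finite α]
    (f : SupBotHom α α) (hmaps : Set.MapsTo f {a | IsAtom a} {a | IsAtom a})
    (hinj : Set.InjOn f {a | IsAtom a}) : Function.Bijective f := by
  refine Finite.surjective_iff_bijective.1 fun b => ?_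
  have hatoms : {a | IsAtom a ∧ a ≤ b} ⊆ Set.range f := by
    rintro a ⟨ha, -⟩
    obtain ⟨c, -, hc⟩ := ((Set.toFinite _).injOn_iff_bijOn_of_mapsTo hmaps |>.1 hinj).surjOn ha
    exact ⟨c, hc⟩
  have hmem := (supClosed_range f).sSup_mem (Set.toFinite _) ⟨⊥, map_bot f⟩ hatoms
  rwa [sSup_atoms_le_eq] at hmem

theorem IsLinearMap'.monotone {V : Type*} {φ : SimpleGraph V → SimpleGraph V}
    (hφ : IsLinearMap' φ) : Monotone φ := fun G H hGH => by
  rw [← sup_eq_right.2 hGH, hφ]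
  exact le_sup_left

section Graph

variable {V : Type*} {G : SimpleGraph V} {a b : V}

theorem isAtom_edge (hab : a ≠ b) : IsAtom (SimpleGraph.edge a b) := by
  refine ⟨fun h => ?_, fun G hG => ?_⟩
  · simpa [hab] using (SimpleGraph.edge_le_iff ⊥).1 h.le
  · by_contra hne
    obtain ⟨c, d, hcd⟩ := SimpleGraph.ne_bot_iff_exists_adj.1 hne
    refine hG.not_ge ((SimpleGraph.edge_le_iff G).2 (Or.inr ?_))
    rcases ((SimpleGraph.edge_adj ..).1 (hG.le hcd)).1 with ⟨rfl, rfl⟩ | ⟨rfl, rfl⟩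
    exacts [hcd, hcd.symm]

theorem exists_edge_le_of_ne_bot (hG : G ≠ ⊥) : ∃ a b, a ≠ b ∧ SimpleGraph.edge a b ≤ G := by
  obtain ⟨a, b, hab⟩ := SimpleGraph.ne_bot_iff_exists_adj.1 hG
  exact ⟨a, b, hab.ne, (SimpleGraph.edge_le_iff G).2 (Or.inr hab)⟩

theorem exists_eq_edge_of_isAtom (hG : IsAtom G) : ∃ a b, a ≠ b ∧ G = SimpleGraph.edge a b := by
  obtain ⟨a, b, hab, hle⟩ := exists_edge_le_of_ne_bot hG.1
  exact ⟨a, b, hab, ((hG.le_iff_eq (isAtom_edge hab).1).1 hle).symm⟩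

theorem edge_isContained_edge {c d : V} (hab : a ≠ b) (hcd : c ≠ d) :
    (SimpleGraph.edge a b).IsContained (SimpleGraph.edge c d) := by
  obtain ⟨σ, rfl, rfl⟩ := MulAction.is_two_pretransitive_iff.1
    (Equiv.Perm.isMultiplyPretransitive V 2) hab hcd
  refine ⟨⟨σ, fun {x y} h => ?_⟩, σ.injective⟩
  simpa [SimpleGraph.edge_adj] using h

/-- The largest graph on `V` in which `S` is independent, that is, the complement of the clique
on `S`; it turns independence of `S` into an upper bound on a graph. -/
def completeOutside (S : Set V) : SimpleGraph V :=
  (⊤ : SimpleGraph V).deleteEdges S.sym2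

theorem completeOutside_adj {S : Set V} :
    (completeOutside S).Adj a b ↔ a ≠ b ∧ ¬(a ∈ S ∧ b ∈ S) := by
  simp [completeOutside]

theorem le_completeOutside_iff {S : Set V} : G ≤ completeOutside S ↔ G.IsIndepSet S := by
  refine ⟨fun h a ha b hb _ hab => (completeOutside_adj.1 (h hab)).2 ⟨ha, hb⟩, fun h a b hab => ?_⟩
  exact completeOutside_adj.2 ⟨hab.ne, fun hS => h hS.1 hS.2 hab.ne hab⟩

theorem isIndepSet_completeOutside (S : Set V) : (completeOutside S).IsIndepSet S :=
  le_completeOutside_iff.1 le_rfl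

theorem subset_of_isIndepSet_completeOutside {S T : Set V} (hT : T.Nontrivial)
    (h : (completeOutside S).IsIndepSet T) : T ⊆ S := by
  intro x hx
  obtain ⟨y, hy, hyx⟩ := hT.exists_ne x
  by_contra hxS
  exact h hx hy hyx.symm (completeOutside_adj.2 ⟨hyx.symm, fun hS => hxS hS.1⟩)

theorem eq_of_isIndepSet_completeOutside {s : ℕ} (hs : 2 ≤ s) {S T : Set.powersetCard V s}
    (h : (completeOutside (S : Set V)).IsIndepSet (T : Set V)) : T = S :=
  Set.powersetCard.eq_iff_subset.2 <| subset_of_isIndepSet_completeOutside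
    (Set.powersetCard.coe_nontrivial_iff.2 hs) h

end Graph

section IndepNum

variable {V : Type*} {G : SimpleGraph V} {k t : ℕ}

theorem indepNum_eq_simpleGraphIndepNum (G : SimpleGraph V) : indepNum G = G.indepNum := by
  simp only [indepNum, SimpleGraph.indepNum, SimpleGraph.isNIndepSet_iff, Set.Pairwise,
    Finset.mem_coe]

variable [Finite V]

theorem le_indepNum_iff :
    k ≤ G.indepNum ↔ ∃ S : Set.powersetCard V k, G.IsIndepSet (S : Set V) := by
  refine ⟨fun h => ?_, fun ⟨S, hS⟩ => ?_⟩
  · obtain ⟨S, hS, hcard⟩ := G.exists_isNIndepSet_indepNum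
    obtain ⟨T, hTS, hT⟩ := Finset.exists_subset_card_eq (h.trans_eq hcard.symm)
    exact ⟨⟨T, hT⟩, hS.mono hTS⟩
  · exact (Set.powersetCard.card_eq S).symm.trans_le hS.card_le_indepNum

theorem indepNum_antitone : Antitone (SimpleGraph.indepNum : SimpleGraph V → ℕ) := by
  intro G H hGH
  obtain ⟨S, hS⟩ := le_indepNum_iff.1 (le_refl H.indepNum)
  exact le_indepNum_iff.2 ⟨S, hS.mono' fun a b hab h => hab (hGH h)⟩

theorem indepNum_bot : (⊥ : SimpleGraph V).indepNum = Nat.card V := by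
  have := Fintype.ofFinite V
  rw [Nat.card_eq_fintype_card]
  obtain ⟨S, -, hcard⟩ := (⊥ : SimpleGraph V).exists_isNIndepSet_indepNum
  have huniv : (⊥ : SimpleGraph V).IsIndepSet (Finset.univ : Finset V) := fun _ _ _ _ _ h => h
  exact le_antisymm (hcard ▸ S.card_le_univ) huniv.card_le_indepNum

theorem indepNum_completeOutside {S : Finset V} (hS : 2 ≤ S.card) :
    (completeOutside (S : Set V)).indepNum = S.card := by
  have hle := (isIndepSet_completeOutside (S : Set V)).card_le_indepNum
  obtain ⟨T, hT, hcard⟩ := (completeOutside (S : Set V)).exists_isNIndepSet_indepNum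
  have hTS := subset_of_isIndepSet_completeOutside
    (Finset.one_lt_card_iff_nontrivial.1 (by omega)) hT
  exact le_antisymm (hcard ▸ Finset.card_le_card hTS) hle

theorem indepNum_le_indepNum_sup_edge_add_one (G : SimpleGraph V) (a b : V) :
    G.indepNum ≤ (G ⊔ SimpleGraph.edge a b).indepNum + 1 := by
  classical
  obtain ⟨S, hS, hcard⟩ := G.exists_isNIndepSet_indepNum
  have herase : (G ⊔ SimpleGraph.edge a b).IsIndepSet (S.erase a : Finset V) := by
    intro x hx y hy hxy hadj
    simp only [Finset.coe_erase, Set.mem_sdiff, Set.mem_singleton_iff] at hx hy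
    rcases hadj with hadj | hadj
    · exact hS hx.1 hy.1 hxy hadj
    · rw [SimpleGraph.edge_adj] at hadj
      tauto
  calc G.indepNum = S.card := hcard.symm
    _ ≤ (S.erase a).card + 1 := Nat.sub_le_iff_le_add.1 Finset.pred_card_le_card_erase
    _ ≤ _ := Nat.add_le_add_right herase.card_le_indepNum 1

theorem exists_le_indepNum_eq (ht : t ≤ Nat.card V) (hG : G.indepNum ≤ t) :
    ∃ H ≤ G, H.indepNum = t := by
  obtain ⟨H, hHG, hH⟩ := exists_minimal_le_of_wellFoundedLT
    (fun H : SimpleGraph V => H.indepNum ≤ t) G hG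
  refine ⟨H, hHG, hH.1.antisymm ?_⟩
  rcases eq_or_ne H ⊥ with rfl | hbot
  · rwa [indepNum_bot]
  obtain ⟨a, b, hab, hle⟩ := exists_edge_le_of_ne_bot hbot
  have hlt : H \ SimpleGraph.edge a b < H := sdiff_lt hle (isAtom_edge hab).1
  have hgt : t < (H \ SimpleGraph.edge a b).indepNum := not_le.1 (hH.not_prop_of_lt hlt)
  have hstep := indepNum_le_indepNum_sup_edge_add_one (H \ SimpleGraph.edge a b) a b
  rw [sdiff_sup_cancel hle] at hstep
  omega

theorem le_indepNum_map_iff {φ : SimpleGraph V → SimpleGraph V} (hφ : Monotone φ) (ht : 2 ≤ t)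
    (htV : t ≤ Nat.card V) (hpres : ∀ G, (φ G).indepNum = t ↔ G.indepNum = t) :
    t ≤ (φ G).indepNum ↔ t ≤ G.indepNum := by
  constructor <;> intro h
  · by_contra! hlt
    obtain ⟨H, hHG, hH⟩ := exists_le_indepNum_eq htV hlt.le
    have hle : (φ G).indepNum ≤ t := ((hpres H).2 hH) ▸ indepNum_antitone (hφ hHG)
    exact hlt.ne ((hpres G).1 (hle.antisymm h))
  · obtain ⟨S, hS⟩ := le_indepNum_iff.1 h
    have hcard : (completeOutside (S : Set V)).indepNum = t :=
      (indepNum_completeOutside (by rwa [Set.powersetCard.card_eq])).trans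
        (Set.powersetCard.card_eq S)
    exact ((hpres _).2 hcard) ▸ indepNum_antitone (hφ (le_completeOutside_iff.2 hS))

theorem max_two_le_indepNum_map_iff {φ : SimpleGraph V → SimpleGraph V} (hφ : Monotone φ)
    (ht : 1 ≤ t) (htV : t ≤ Nat.card V) (hpres : ∀ G, (φ G).indepNum = t ↔ G.indepNum = t) :
    max 2 t ≤ (φ G).indepNum ↔ max 2 t ≤ G.indepNum := by
  rcases ht.eq_or_lt with rfl | ht
  · have : Nonempty V := (Nat.card_pos_iff.1 htV).1
    have hpos (G : SimpleGraph V) : 1 ≤ G.indepNum :=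
      SimpleGraph.IsIndepSet.card_le_indepNum (t := {Classical.arbitrary V}) (by simp)
    have := hpos G
    have := hpos (φ G)
    have := hpres G
    omega
  · rw [max_eq_right ht]
    exact le_indepNum_map_iff hφ ht htV hpres

end IndepNum

section DependentSets

variable {V : Type*} {G H : SimpleGraph V} {s : ℕ}

/-- The `s`-element sets of vertices spanning at least one edge of `G`, as a set in
Mathlib's type of `s`-subsets. A preserver permutes them, so their number is an invariant. -/
def dependentSets (s : ℕ) (G : SimpleGraph V) : Set (Set.powersetCard V s) :=
  {S | ¬ G.IsIndepSet (S : Set V)}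

theorem mem_dependentSets_iff {S : Set.powersetCard V s} :
    S ∈ dependentSets s G ↔ ∃ a ∈ S, ∃ b ∈ S, G.Adj a b := by
  simp only [dependentSets, Set.mem_ofPred_eq, Set.Pairwise]
  push Not
  refine ⟨fun ⟨a, ha, b, hb, _, h⟩ => ⟨a, ha, b, hb, h⟩, fun ⟨a, ha, b, hb, h⟩ =>
    ⟨a, ha, b, hb, h.ne, h⟩⟩

theorem mem_dependentSets_edge_iff {a b : V} (hab : a ≠ b) {S : Set.powersetCard V s} :
    S ∈ dependentSets s (SimpleGraph.edge a b) ↔ a ∈ S ∧ b ∈ S := by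
  simp only [mem_dependentSets_iff, SimpleGraph.edge_adj]
  grind

theorem dependentSets_mono (hGH : G ≤ H) : dependentSets s G ⊆ dependentSets s H := by
  simp only [Set.subset_def, mem_dependentSets_iff]
  exact fun S ⟨a, ha, b, hb, h⟩ => ⟨a, ha, b, hb, hGH h⟩

theorem ncard_dependentSets_le_of_isContained {W : Type*} [Finite W] {H : SimpleGraph W}
    (h : G.IsContained H) : (dependentSets s G).ncard ≤ (dependentSets s H).ncard := by
  obtain ⟨f⟩ := h
  refine Set.ncard_le_ncard_of_injOn (Set.powersetCard.map s f.toEmbedding) (fun S hS => ?_)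
    (fun S _ T _ hST => ?_)
  · obtain ⟨a, ha, b, hb, hab⟩ := mem_dependentSets_iff.1 hS
    rw [mem_dependentSets_iff]
    refine ⟨f a, ?_, f b, ?_, f.toHom.map_adj hab⟩ <;>
      rw [Set.powersetCard.mem_map_iff_mem_range]
    exacts [⟨a, ha, rfl⟩, ⟨b, hb, rfl⟩]
  · exact Subtype.ext (Finset.map_injective f.toEmbedding (congrArg Subtype.val hST))

variable [Finite V]

theorem ncard_dependentSets_eq_of_isAtom {A B : SimpleGraph V} (hA : IsAtom A) (hB : IsAtom B) :
    (dependentSets s A).ncard = (dependentSets s B).ncard := by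
  obtain ⟨a, b, hab, rfl⟩ := exists_eq_edge_of_isAtom hA
  obtain ⟨c, d, hcd, rfl⟩ := exists_eq_edge_of_isAtom hB
  exact le_antisymm (ncard_dependentSets_le_of_isContained (edge_isContained_edge hab hcd))
    (ncard_dependentSets_le_of_isContained (edge_isContained_edge hcd hab))

theorem dependentSets_eq_empty_iff (hs : 2 ≤ s) (hsV : s ≤ Nat.card V) :
    dependentSets s G = ∅ ↔ G = ⊥ := by
  classical
  have := Fintype.ofFinite V
  refine ⟨fun h => ?_, fun h => ?_⟩
  · by_contra hG
    obtain ⟨a, b, hab⟩ := SimpleGraph.ne_bot_iff_exists_adj.1 hG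
    obtain ⟨S, hsub, hS⟩ := Finset.exists_superset_card_eq (s := {a, b}) (n := s)
      ((Finset.card_pair hab.ne).trans_le hs) (by rwa [← Nat.card_eq_fintype_card])
    have hmem : (⟨S, hS⟩ : Set.powersetCard V s) ∈ dependentSets s G :=
      mem_dependentSets_iff.2 ⟨a, hsub (by simp), b, hsub (by simp), hab⟩
    exact h.subset hmem
  · simp [Set.eq_empty_iff_forall_notMem, mem_dependentSets_iff, h]

theorem le_of_dependentSets_subset_of_isAtom {A : SimpleGraph V} (hs : 2 ≤ s)
    (hsV : s = 2 ∨ s < Nat.card V) (hA : IsAtom A)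
    (h : dependentSets s G ⊆ dependentSets s A) : G ≤ A := by
  classical
  obtain ⟨a, b, hab, rfl⟩ := exists_eq_edge_of_isAtom hA
  intro c d hcd
  by_contra hne
  obtain ⟨x, hxab, hxcd⟩ : ∃ x ∈ ({a, b} : Finset V), x ∉ ({c, d} : Finset V) := by
    by_contra! hsub
    simp only [Finset.mem_insert, Finset.mem_singleton, forall_eq_or_imp, forall_eq] at hsub
    grind [hcd.ne]
  have htwo : 2 < Nat.card V := by
    have := Fintype.ofFinite V
    rw [← Finset.card_pair hcd.ne, Nat.card_eq_fintype_card]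
    exact Finset.card_lt_univ_of_notMem hxcd
  obtain ⟨S, hcdS, hxS, hS⟩ := exists_superset_card_eq_notMem (s := s) hxcd
    ((Finset.card_pair hcd.ne).trans_le hs) (by omega)
  have hmem : (⟨S, hS⟩ : Set.powersetCard V s) ∈ dependentSets s G :=
    mem_dependentSets_iff.2 ⟨c, hcdS (by simp), d, hcdS (by simp), hcd⟩
  have habS : a ∈ S ∧ b ∈ S := (mem_dependentSets_edge_iff hab).1 (h hmem)
  rcases Finset.mem_insert.1 hxab with rfl | hxb
  · exact hxS habS.1
  · exact hxS (Finset.mem_singleton.1 hxb ▸ habS.2)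

end DependentSets

section Transport

variable {V : Type*} [Finite V] {G : SimpleGraph V} {s : ℕ} {φ : SimpleGraph V → SimpleGraph V}

theorem exists_isIndepSet_map_iff (hs : 2 ≤ s) (hφ : IsLinearMap' φ)
    (hpres : ∀ G, s ≤ (φ G).indepNum ↔ s ≤ G.indepNum) (S : Set.powersetCard V s) :
    ∃ T : Set.powersetCard V s, ∀ G : SimpleGraph V,
      (φ G).IsIndepSet (T : Set V) ↔ G.IsIndepSet (S : Set V) := by
  obtain ⟨T, hT⟩ := le_indepNum_iff.1
    ((hpres (completeOutside (S : Set V))).2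
      (le_indepNum_iff.2 ⟨S, isIndepSet_completeOutside _⟩))
  refine ⟨T, fun G => ⟨fun hG => ?_, fun hG => ?_⟩⟩
  · have hsup : (φ (G ⊔ completeOutside (S : Set V))).IsIndepSet (T : Set V) := by
      rw [hφ]
      exact fun a ha b hb hab hadj => hadj.elim (hG ha hb hab) (hT ha hb hab)
    obtain ⟨U, hU⟩ := le_indepNum_iff.1 ((hpres _).1 (le_indepNum_iff.2 ⟨T, hsup⟩))
    have hUS : U = S := eq_of_isIndepSet_completeOutside hs
      (hU.mono' fun a b hab h => hab (Or.inr h))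
    subst hUS
    exact hU.mono' fun a b hab h => hab (Or.inl h)
  · exact hT.mono' fun a b hab h => hab (hφ.monotone (le_completeOutside_iff.2 hG) h)

theorem exists_perm_isIndepSet_map_iff (hs : 2 ≤ s) (hφ : IsLinearMap' φ)
    (hpres : ∀ G, s ≤ (φ G).indepNum ↔ s ≤ G.indepNum) :
    ∃ p : Equiv.Perm (Set.powersetCard V s), ∀ (S : Set.powersetCard V s) (G : SimpleGraph V),
      (φ G).IsIndepSet (p S : Set V) ↔ G.IsIndepSet (S : Set V) := by
  choose p hp using exists_isIndepSet_map_iff hs hφ hpres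
  have hinj : Function.Injective p := by
    intro S T hST
    have hS := (hp S _).2 (isIndepSet_completeOutside (S : Set V))
    rw [hST, hp] at hS
    exact (eq_of_isIndepSet_completeOutside hs hS).symm
  exact ⟨Equiv.ofBijective p (Finite.injective_iff_bijective.1 hinj), hp⟩

theorem exists_perm_dependentSets_map (hs : 2 ≤ s) (hφ : IsLinearMap' φ)
    (hpres : ∀ G, s ≤ (φ G).indepNum ↔ s ≤ G.indepNum) :
    ∃ p : Equiv.Perm (Set.powersetCard V s), ∀ G : SimpleGraph V,
      dependentSets s (φ G) = p '' dependentSets s G := by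
  obtain ⟨p, hp⟩ := exists_perm_isIndepSet_map_iff hs hφ hpres
  refine ⟨p, fun G => ?_⟩
  ext T
  obtain ⟨S, rfl⟩ := p.surjective T
  simp only [p.injective.mem_set_image]
  exact not_congr (hp S G)

variable {p : Equiv.Perm (Set.powersetCard V s)}

theorem map_eq_bot_iff_of_dependentSets_map (hs : 2 ≤ s) (hsV : s ≤ Nat.card V)
    (hp : ∀ G, dependentSets s (φ G) = p '' dependentSets s G) : φ G = ⊥ ↔ G = ⊥ := by
  rw [← dependentSets_eq_empty_iff hs hsV, hp, Set.image_eq_empty,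
    dependentSets_eq_empty_iff hs hsV]

theorem isAtom_map_of_dependentSets_map (hs : 2 ≤ s) (hsV : s = 2 ∨ s < Nat.card V)
    (hp : ∀ G, dependentSets s (φ G) = p '' dependentSets s G) (hG : IsAtom G) :
    IsAtom (φ G) := by
  obtain ⟨a, b, hab, -⟩ := exists_eq_edge_of_isAtom hG
  have : Nontrivial V := ⟨a, b, hab⟩
  have htwo : 1 < Nat.card V := Finite.one_lt_card
  have hne : φ G ≠ ⊥ := (map_eq_bot_iff_of_dependentSets_map hs (by omega) hp).not.2 hG.1
  obtain ⟨A, hA, hle⟩ := (eq_bot_or_exists_atom_le (φ G)).resolve_left hne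
  have hcard : (dependentSets s (φ G)).ncard = (dependentSets s A).ncard := by
    rw [hp, Set.ncard_image_of_injective _ p.injective, ncard_dependentSets_eq_of_isAtom hG hA]
  have heq := Set.eq_of_subset_of_ncard_le (dependentSets_mono hle) hcard.le
  rwa [(le_of_dependentSets_subset_of_isAtom hs hsV hA heq.ge).antisymm hle]

theorem injOn_isAtom_of_dependentSets_map (hs : 2 ≤ s) (hsV : s = 2 ∨ s < Nat.card V)
    (hp : ∀ G, dependentSets s (φ G) = p '' dependentSets s G) :
    Set.InjOn φ {G | IsAtom G} := by
  intro A hA B hB hAB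
  have heq : dependentSets s A = dependentSets s B :=
    p.injective.image_injective (by rw [← hp, ← hp, hAB])
  exact (le_of_dependentSets_subset_of_isAtom hs hsV hB heq.le).antisymm
    (le_of_dependentSets_subset_of_isAtom hs hsV hA heq.ge)

end Transport

theorem stmt9_general {V : Type*} [Finite V] {t : ℕ} (ht : 1 ≤ t) (htV : t < Nat.card V)
    {φ : SimpleGraph V → SimpleGraph V} (hφ : IsLinearMap' φ)
    (hpres : ∀ G : SimpleGraph V, indepNum (φ G) = t ↔ indepNum G = t) :
    Function.Bijective φ := by
  simp only [indepNum_eq_simpleGraphIndepNum] at hpres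
  have hs : 2 ≤ max 2 t := le_max_left 2 t
  obtain ⟨p, hp⟩ := exists_perm_dependentSets_map hs hφ fun G =>
    max_two_le_indepNum_map_iff hφ.monotone ht htV.le hpres
  have hbot : φ ⊥ = ⊥ := (map_eq_bot_iff_of_dependentSets_map hs (by omega) hp).2 rfl
  exact bijective_of_injOn_isAtom ⟨⟨φ, hφ⟩, hbot⟩
    (fun _ => isAtom_map_of_dependentSets_map hs (by omega) hp)
    (injOn_isAtom_of_dependentSets_map hs (by omega) hp)

theorem stmt9 (n t : ℕ) (ht : 1 ≤ t) (htn : t ≤ n - 1)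
    (φ : SimpleGraph (Fin n) → SimpleGraph (Fin n)) (hφ : IsCompleteLinearMap φ)
    (hpres : ∀ G : SimpleGraph (Fin n), indepNum (φ G) = t ↔ indepNum G = t) :
    Function.Bijective φ :=
  stmt9_general ht (by rw [Nat.card_fin]; omega) hφ.1 hpres
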